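/- arXiv:2206.09343 — 3 statements merged into one kernel-verified Lean document; each statement's English description precedes it below -/
import Mathlib

section
/- Let Ω ⊆ ℝ² be open, σ : Ω → (real 2×2 matrices) be C¹, and let γ : ℝ → Ω be twice differentiable at t₀ with τ(t) := γ'(t) of Euclidean norm 1 for all t; let ν(t) = (−τ²(t), τ¹(t)). Then the function t ↦ ν(t)ᵀ σ(γ(t)) τ(t) is differentiable at t₀ with derivative ν(t₀)ᵀ (D_{τ(t₀)}σ)(γ(t₀)) τ(t₀) + ( ν(t₀)ᵀ σ(γ(t₀)) ν(t₀) − τ(t₀)ᵀ σ(γ(t₀)) τ(t₀) ) · (ν(t₀)·τ'(t₀)), where D_{τ(t₀)}σ denotes the directional derivative of σ in the direction τ(t₀). -/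
noncomputable section

open Matrix BigOperators

abbrev Vec2 := Fin 2 → ℝ
abbrev Mat2 := Matrix (Fin 2) (Fin 2) ℝ

/-- The two-dimensional alternating symbol: `eps2 0 1 = 1`, `eps2 1 0 = -1`, `eps2 i i = 0`. -/
def eps2 (i j : Fin 2) : ℝ := (j.1 : ℝ) - (i.1 : ℝ)

/-- Euclidean rotated normal `ν = (-τ², τ¹)` of a vector `τ`. -/
def rot2 (τ : Vec2) : Vec2 := ![-(τ 1), τ 0]

/-- The `g`-rotated normal `ν̃^k = -g^{kj} ε_{ji} τ^i`. -/
def gNormal (g : Mat2) (τ : Vec2) : Vec2 :=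
  fun k => -∑ j, ∑ i, g⁻¹ k j * eps2 j i * τ i

/-- The `g`-unit tangent `τ̂ = τ / √(τᵀ g τ)`. -/
def gUnitTangent (g : Mat2) (τ : Vec2) : Vec2 :=
  (Real.sqrt (τ ⬝ᵥ g.mulVec τ))⁻¹ • τ

/-- The `g`-unit normal `n̂ = ν̃ / √(ν̃ᵀ g ν̃)`. -/
def gUnitNormal (g : Mat2) (τ : Vec2) : Vec2 :=
  (Real.sqrt (gNormal g τ ⬝ᵥ g.mulVec (gNormal g τ)))⁻¹ • gNormal g τ

/-- Partial derivative `∂_i f (x)`. -/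
def pd (i : Fin 2) (f : Vec2 → ℝ) (x : Vec2) : ℝ := fderiv ℝ f x (Pi.single i 1)

/-- Christoffel symbol of the first kind `Γ_{ijl} = ½(∂_i g_{jl} + ∂_j g_{li} - ∂_l g_{ij})`. -/
def Gamma1 (g : Vec2 → Mat2) (x : Vec2) (i j l : Fin 2) : ℝ :=
  (pd i (fun y => g y j l) x + pd j (fun y => g y l i) x - pd l (fun y => g y i j) x) / 2

/-- Christoffel symbol of the second kind `Γ^k_{ij} = g^{kl} Γ_{ijl}`. -/
def Gamma2 (g : Vec2 → Mat2) (x : Vec2) (i j k : Fin 2) : ℝ :=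
  ∑ l, (g x)⁻¹ k l * Gamma1 g x i j l

/-- Euclidean incompatibility `inc σ = ∂₁∂₁σ₂₂ - 2 ∂₁∂₂σ₁₂ + ∂₂∂₂σ₁₁`. -/
def incE (σ : Vec2 → Mat2) (x : Vec2) : ℝ :=
  pd 0 (pd 0 (fun y => σ y 1 1)) x - 2 * pd 0 (pd 1 (fun y => σ y 0 1)) x
    + pd 1 (pd 1 (fun y => σ y 0 0)) x

/-- Covariant curl `(curl_g σ)_i = (det g)^{-1/2} ε^{jk}(∂_j σ_{ik} - Γ^m_{ji} σ_{mk})`. -/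
def curlg (g σ : Vec2 → Mat2) (x : Vec2) (i : Fin 2) : ℝ :=
  (Real.sqrt (g x).det)⁻¹ * ∑ j, ∑ k, eps2 j k *
    (pd j (fun y => σ y i k) x - ∑ m, Gamma2 g x j i m * σ x m k)

/-- Covariant incompatibility `inc_g σ`. -/
def incg (g σ : Vec2 → Mat2) (x : Vec2) : ℝ :=
  ((g x).det)⁻¹ *
    ((∑ q, ∑ i, ∑ j, ∑ k, eps2 q i * eps2 j k * pd j (pd q (fun y => σ y i k)) x)
      - (∑ q, ∑ i, ∑ j, ∑ k, eps2 q i * eps2 j k *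
          pd q (fun y => ∑ m, Gamma2 g y j i m * σ y m k) x)
      - (∑ q, ∑ i, ∑ j, ∑ k, (∑ l, Gamma2 g x l q l) * eps2 q i * eps2 j k *
          (pd j (fun y => σ y i k) x - ∑ m, Gamma2 g x j i m * σ x m k)))

/-- Coordinate Riemann component `R₁₂₂₁ = ∂₁Γ₂₂₁ - ∂₂Γ₁₂₁ - Γ₁₁ₚΓᵖ₂₂ + Γ₂₁ₚΓᵖ₁₂`. -/
def R1221 (g : Vec2 → Mat2) (x : Vec2) : ℝ :=
  pd 0 (fun y => Gamma1 g y 1 1 0) x - pd 1 (fun y => Gamma1 g y 0 1 0) x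
    - (∑ p, Gamma1 g x 0 0 p * Gamma2 g x 1 1 p)
    + (∑ p, Gamma1 g x 1 0 p * Gamma2 g x 0 1 p)

/-! A unit vector `τ` moving in the plane obeys the Frenet equations `τ' = κ ν`, `ν' = -κ τ` with
`κ = ν · τ'`: differentiating `τ · τ = 1` shows that `τ'` is orthogonal to `τ`, hence a multiple of
`ν`, and the rotation taking `τ` to `ν` squares to `-1`. Substituting them into the product rule for
`νᵀ A τ` turns `ν'ᵀ A τ + νᵀ A τ'` into `κ (νᵀ A ν - τᵀ A τ)`. -/

section MatrixCalculus

open scoped Topology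

variable {𝕜 m n : Type*} [NontriviallyNormedField 𝕜] [Fintype n] {t : 𝕜}

section Algebra

variable {𝔸 : Type*} [NormedRing 𝔸] [NormedAlgebra 𝕜 𝔸] {u v : 𝕜 → n → 𝔸} {u' v' : n → 𝔸}

theorem hasDerivAt_dotProduct (hu : HasDerivAt u u' t) (hv : HasDerivAt v v' t) :
    HasDerivAt (fun s => u s ⬝ᵥ v s) (u' ⬝ᵥ v t + u t ⬝ᵥ v') t := by
  simp only [dotProduct, ← Finset.sum_add_distrib]
  exact HasDerivAt.fun_sum fun i _ => (hasDerivAt_pi.1 hu i).fun_mul (hasDerivAt_pi.1 hv i)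

theorem hasDerivAt_mulVec [Finite m] {A : 𝕜 → Matrix m n 𝔸} {A' : Matrix m n 𝔸}
    (hA : ∀ i j, HasDerivAt (fun s => A s i j) (A' i j) t) (hv : HasDerivAt v v' t) :
    HasDerivAt (fun s => A s *ᵥ v s) (A' *ᵥ v t + A t *ᵥ v') t :=
  hasDerivAt_pi.2 fun i => hasDerivAt_dotProduct (hasDerivAt_pi.2 (hA i)) hv

end Algebra

theorem dotProduct_eq_zero_of_eventually_dotProduct_self_eq [NeZero (2 : 𝕜)]
    {u : 𝕜 → n → 𝕜} {u' : n → 𝕜} {c : 𝕜} (hu : HasDerivAt u u' t)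
    (hc : ∀ᶠ s in 𝓝 t, u s ⬝ᵥ u s = c) : u t ⬝ᵥ u' = 0 := by
  have hderiv : u' ⬝ᵥ u t + u t ⬝ᵥ u' = 0 :=
    (hasDerivAt_dotProduct hu hu).unique ((hasDerivAt_const t c).congr_of_eventuallyEq hc)
  rw [dotProduct_comm, ← two_mul] at hderiv
  exact (mul_eq_zero.1 hderiv).resolve_left two_ne_zero

end MatrixCalculus

theorem rot2_smul (c : ℝ) (v : Vec2) : rot2 (c • v) = c • rot2 v := by
  simp [rot2]

theorem rot2_rot2 (v : Vec2) : rot2 (rot2 v) = -v := by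
  ext i
  fin_cases i <;> simp [rot2]

theorem eq_dotProduct_smul_rot2 {u v : Vec2} (hu : u ⬝ᵥ u = 1) (huv : u ⬝ᵥ v = 0) :
    v = (rot2 u ⬝ᵥ v) • rot2 u := by
  simp only [dotProduct, Fin.sum_univ_two] at hu huv
  have hcoord₀ : v 0 = (-u 1 * v 0 + u 0 * v 1) * -u 1 := by
    linear_combination -v 0 * hu + u 0 * huv
  have hcoord₁ : v 1 = (-u 1 * v 0 + u 0 * v 1) * u 0 := by
    linear_combination -v 1 * hu + u 1 * huv
  ext i
  fin_cases i
  · simpa [rot2, dotProduct, Fin.sum_univ_two] using hcoord₀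
  · simpa [rot2, dotProduct, Fin.sum_univ_two] using hcoord₁

theorem hasDerivAt_rot2 {τ : ℝ → Vec2} {τ' : Vec2} {t : ℝ} (hτ : HasDerivAt τ τ' t) :
    HasDerivAt (fun s => rot2 (τ s)) (rot2 τ') t := by
  have hcoord := hasDerivAt_pi.1 hτ
  refine hasDerivAt_pi.2 fun i => ?_
  fin_cases i
  · exact (hcoord 1).fun_neg
  · exact hcoord 0

section Frenet

open scoped Topology

variable {τ : ℝ → Vec2} {t : ℝ}

theorem hasDerivAt_tangent_of_unit {τ' : Vec2} (hτ : HasDerivAt τ τ' t)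
    (hunit : ∀ᶠ s in 𝓝 t, τ s ⬝ᵥ τ s = 1) :
    HasDerivAt τ ((rot2 (τ t) ⬝ᵥ τ') • rot2 (τ t)) t :=
  hτ.congr_deriv <| eq_dotProduct_smul_rot2 hunit.self_of_nhds
    (dotProduct_eq_zero_of_eventually_dotProduct_self_eq hτ hunit)

theorem hasDerivAt_normal {κ : ℝ} (hτ : HasDerivAt τ (κ • rot2 (τ t)) t) :
    HasDerivAt (fun s => rot2 (τ s)) (-(κ • τ t)) t := by
  simpa only [rot2_smul, rot2_rot2, smul_neg] using hasDerivAt_rot2 hτ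

theorem hasDerivAt_normal_dotProduct_mulVec_tangent {A : ℝ → Mat2} {A' : Mat2} {κ : ℝ}
    (hA : ∀ i j, HasDerivAt (fun s => A s i j) (A' i j) t)
    (hτ : HasDerivAt τ (κ • rot2 (τ t)) t) :
    HasDerivAt (fun s => rot2 (τ s) ⬝ᵥ A s *ᵥ τ s)
      (rot2 (τ t) ⬝ᵥ A' *ᵥ τ t +
        (rot2 (τ t) ⬝ᵥ A t *ᵥ rot2 (τ t) - τ t ⬝ᵥ A t *ᵥ τ t) * κ) t := by
  refine (hasDerivAt_dotProduct (hasDerivAt_normal hτ) (hasDerivAt_mulVec hA hτ)).congr_deriv ?_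
  simp only [neg_dotProduct, smul_dotProduct, dotProduct_add, mulVec_smul, dotProduct_smul,
    smul_eq_mul]
  ring

theorem deriv_sigma_nu_tau_general {σ : Vec2 → Mat2} {γ : ℝ → Vec2} {τ' : Vec2}
    (hσ : ∀ i j, DifferentiableAt ℝ (fun y => σ y i j) (γ t))
    (hγ : HasDerivAt γ (τ t) t) (hτ : HasDerivAt τ τ' t)
    (hunit : ∀ᶠ s in 𝓝 t, τ s ⬝ᵥ τ s = 1) :
    HasDerivAt (fun s => rot2 (τ s) ⬝ᵥ σ (γ s) *ᵥ τ s)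
      (rot2 (τ t) ⬝ᵥ (Matrix.of fun i j => fderiv ℝ (fun y => σ y i j) (γ t) (τ t)) *ᵥ τ t +
        (rot2 (τ t) ⬝ᵥ σ (γ t) *ᵥ rot2 (τ t) - τ t ⬝ᵥ σ (γ t) *ᵥ τ t) * (rot2 (τ t) ⬝ᵥ τ')) t :=
  hasDerivAt_normal_dotProduct_mulVec_tangent
    (fun i j => (hσ i j).hasFDerivAt.comp_hasDerivAt t hγ) (hasDerivAt_tangent_of_unit hτ hunit)

end Frenet

/-- derivative of `ν ᵀ σ(γ(t)) τ` along a unit-speed curve. -/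
theorem deriv_sigma_nu_tau
    (Ω : Set Vec2) (hΩ : IsOpen Ω)
    (σ : Vec2 → Mat2) (hσ : ∀ i j, ContDiffOn ℝ 1 (fun y => σ y i j) Ω)
    (γ : ℝ → Vec2) (t₀ : ℝ) (hγΩ : ∀ t, γ t ∈ Ω)
    (hγ : Differentiable ℝ γ) (hγ2 : DifferentiableAt ℝ (deriv γ) t₀)
    (hunit : ∀ t, deriv γ t ⬝ᵥ deriv γ t = 1)
    (τ : ℝ → Vec2) (hτ : τ = deriv γ)
    (ν : ℝ → Vec2) (hν : ν = fun t => rot2 (τ t))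
    (Dσ : Mat2)
    (hDσ : Dσ = Matrix.of fun i j => fderiv ℝ (fun y => σ y i j) (γ t₀) (τ t₀)) :
    HasDerivAt (fun t => ν t ⬝ᵥ (σ (γ t)).mulVec (τ t))
      (ν t₀ ⬝ᵥ Dσ.mulVec (τ t₀) +
        (ν t₀ ⬝ᵥ (σ (γ t₀)).mulVec (ν t₀) - τ t₀ ⬝ᵥ (σ (γ t₀)).mulVec (τ t₀)) *
          (ν t₀ ⬝ᵥ deriv τ t₀)) t₀ := by
  subst hτ hν hDσ
  exact deriv_sigma_nu_tau_general
    (fun i j => ((hσ i j).contDiffAt (hΩ.mem_nhds (hγΩ t₀))).differentiableAt one_ne_zero)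
    (hγ t₀).hasDerivAt hγ2.hasDerivAt (.of_forall hunit)
end
end

section
/- Let Ω ⊆ ℝ² be open, p ∈ Ω, and let g, σ : Ω → (symmetric real 2×2 matrices) be C² with g(x) positive definite for all x. For t ∈ ℝ with det((g+tσ)(p)) ≠ 0, let K(g+tσ)(p) = R₁₂₂₁(g+tσ)(p)/det((g+tσ)(p)) denote the coordinate Gauss curvature of the metric g+tσ at p. Then the function t ↦ K(g+tσ)(p) · √(det((g+tσ)(p))) is differentiable at t = 0 with derivative −½ √(det g(p)) · (inc_g σ)(p). (First variation of the Gauss curvature density in the direction σ.) -/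
noncomputable section

open Matrix BigOperators

open Filter Topology

/-!
Write `R(t)` and `D(t)` for `R₁₂₂₁(g + tσ)(p)` and `det (g + tσ)(p)`, so that the density is
`R / √D`. Jacobi's formula gives `D'(0) = det g · tr (g⁻¹σ)`, so it all reduces to the identity
`det g · inc_g σ = R₁₂₂₁(g) tr (g⁻¹σ) - 2 R'(0)`.

The second derivatives of `g` enter `inc_g σ` only through `∂₁Γᵐ₂ⱼ - ∂₂Γᵐ₁ⱼ`, that is, through the
mixed Riemann tensor `R₁₂ⱼᵐ` up to products of Christoffel symbols. In dimension two the covariant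
tensor is `R₁₂ⱼₗ = ε_{lj} R₁₂₂₁`, and contracting `ε^{jk} R₁₂ⱼᵐ σ_{mk}` produces the trace term. The
second derivatives of `σ` enter both sides through the Euclidean incompatibility. What remains is
a polynomial identity in `Γᵏᵢⱼ`, `σ` and `∂σ`, in which neither `g` nor `g⁻¹` occurs.
-/

lemma dotProduct_inv_mulVec_eq_inv_mulVec_dotProduct {R n : Type*} [CommRing R] [Fintype n]
    [DecidableEq n] {A : Matrix n n R} (hA : A.IsSymm) (u v : n → R) :
    u ⬝ᵥ A⁻¹ *ᵥ v = (A⁻¹ *ᵥ u) ⬝ᵥ v := by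
  rw [dotProduct_mulVec, ← mulVec_transpose, transpose_nonsing_inv, hA.eq]

section Calculus

variable {𝕜 n : Type*} [NontriviallyNormedField 𝕜] [Fintype n] [DecidableEq n]

lemma hasDerivAt_add_smul {E : Type*} [NormedAddCommGroup E] [NormedSpace 𝕜 E] (A B : E) (t : 𝕜) :
    HasDerivAt (fun s : 𝕜 => A + s • B) B t := by
  simpa using ((hasDerivAt_id t).smul_const B).const_add A

lemma hasDerivAt_det_add_smul {A : Matrix n n 𝕜} (hA : IsUnit A.det) (B : Matrix n n 𝕜) :
    HasDerivAt (fun t : 𝕜 => (A + t • B).det) (A.det * (A⁻¹ * B).trace) 0 := by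
  have hfactor (t : 𝕜) : A + t • B = A * (1 + t • (A⁻¹ * B)) := by
    rw [mul_add, mul_one, mul_smul_comm, mul_nonsing_inv_cancel_left A B hA]
  set q := (det (1 + (Polynomial.X : Polynomial 𝕜) • (A⁻¹ * B).map Polynomial.C)).divX.divX
  have hexpand (t : 𝕜) : (A + t • B).det =
      A.det * (1 + (A⁻¹ * B).trace * t + q.eval t * t ^ 2) := by
    rw [hfactor, det_mul, det_one_add_smul]
  have hlin := (hasDerivAt_id (0 : 𝕜)).const_mul (A⁻¹ * B).trace |>.const_add 1
  have hquad := (q.hasDerivAt 0).fun_mul (hasDerivAt_pow 2 (0 : 𝕜))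
  simpa [hexpand] using (hlin.add hquad).const_mul A.det

lemma eventually_isUnit_det {X : Type*} [TopologicalSpace X] {M : X → Matrix n n 𝕜} {x : X}
    (hM : ∀ i j, ContinuousAt (fun y => M y i j) x) (hx : IsUnit (M x).det) :
    ∀ᶠ y in 𝓝 x, IsUnit (M y).det := by
  have hcont : ContinuousAt M x := continuousAt_pi.2 fun i => continuousAt_pi.2 (hM i)
  have hdet : ContinuousAt (fun y => (M y).det) x :=
    (continuous_id.matrix_det.continuousAt).comp hcont
  simpa only [isUnit_iff_ne_zero] using hdet.eventually_ne hx.ne_zero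

variable [CompleteSpace 𝕜]

open scoped Matrix.Norms.Operator in
variable (𝕜 n) in
lemma hasSummableGeomSeries_matrix : HasSummableGeomSeries (Matrix n n 𝕜) := by
  -- Instance search would pick the product uniformity, not reducibly that of the norm.
  have : @CompleteSpace (Matrix n n 𝕜) PseudoMetricSpace.toUniformSpace :=
    FiniteDimensional.complete 𝕜 _
  infer_instance

open scoped Matrix.Norms.Operator in
lemma differentiableAt_inv_apply {E : Type*} [NormedAddCommGroup E] [NormedSpace 𝕜 E]
    {M : E → Matrix n n 𝕜} {x : E} (hM : ∀ i j, DifferentiableAt 𝕜 (fun y => M y i j) x)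
    (hx : IsUnit (M x).det) (i j : n) : DifferentiableAt 𝕜 (fun y => (M y)⁻¹ i j) x := by
  have := hasSummableGeomSeries_matrix 𝕜 n
  have hdiff : DifferentiableAt 𝕜 M x :=
    differentiableAt_pi.2 fun i => differentiableAt_pi.2 (hM i)
  have hinv := hdiff.inverse ((isUnit_iff_isUnit_det _).2 hx)
  simpa only [nonsing_inv_eq_ringInverse] using
    differentiableAt_pi.1 (differentiableAt_pi.1 hinv i) j

open scoped Matrix.Norms.Operator in
lemma hasDerivAt_inv_add_smul_apply {A : Matrix n n 𝕜} (hA : IsUnit A.det) (B : Matrix n n 𝕜)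
    (i j : n) :
    HasDerivAt (fun t : 𝕜 => (A + t • B)⁻¹ i j) (-(A⁻¹ * B * A⁻¹) i j) 0 := by
  have := hasSummableGeomSeries_matrix 𝕜 n
  obtain ⟨u, rfl⟩ := (isUnit_iff_isUnit_det A).2 hA
  have hinv := (hasFDerivAt_ringInverse (𝕜 := 𝕜) u).comp_hasDerivAt_of_eq 0
    (hasDerivAt_add_smul (u : Matrix n n 𝕜) B 0) (by simp)
  simpa [← nonsing_inv_eq_ringInverse] using hasDerivAt_pi.1 (hasDerivAt_pi.1 hinv i) j

lemma hasDerivAt_dotProduct_inv_mulVec {A : Matrix n n 𝕜} (hA : IsUnit A.det) (B : Matrix n n 𝕜)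
    (u u' v v' : n → 𝕜) :
    HasDerivAt (fun t : 𝕜 => (u + t • u') ⬝ᵥ (A + t • B)⁻¹ *ᵥ (v + t • v'))
      (u' ⬝ᵥ A⁻¹ *ᵥ v + u ⬝ᵥ A⁻¹ *ᵥ v' - u ⬝ᵥ (A⁻¹ * B * A⁻¹) *ᵥ v) 0 := by
  have hentry (i j : n) :=
    (hasDerivAt_add_smul (u i) (u' i) 0).fun_mul ((hasDerivAt_inv_add_smul_apply hA B i j).fun_mul
      (hasDerivAt_add_smul (v j) (v' j) 0))
  have hsum := HasDerivAt.fun_sum (u := Finset.univ) fun i _ =>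
    HasDerivAt.fun_sum (u := Finset.univ) fun j _ => hentry i j
  convert! hsum using 1
  · simp [dotProduct, mulVec, Finset.mul_sum]
  · simp only [dotProduct, mulVec, Finset.mul_sum, ← Finset.sum_add_distrib,
      ← Finset.sum_sub_distrib, zero_smul, add_zero]
    exact Finset.sum_congr rfl fun i _ => Finset.sum_congr rfl fun j _ => by ring

lemma hasDerivAt_div_mul_sqrt {R D : ℝ → ℝ} {R' D' t : ℝ} (hR : HasDerivAt R R' t)
    (hD : HasDerivAt D D' t) (ht : 0 < D t) :
    HasDerivAt (fun s => R s / D s * √(D s))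
      (√(D t) * (R' / D t - R t * D' / (2 * D t ^ 2))) t := by
  refine ((hR.fun_div hD ht.ne').fun_mul (hD.sqrt ht.ne')).congr_deriv ?_
  field_simp
  rw [Real.sq_sqrt ht.le]
  ring

end Calculus

section PartialDerivatives

variable {f h : Vec2 → ℝ} {x : Vec2} (i : Fin 2)

lemma pd_congr (H : f =ᶠ[𝓝 x] h) : pd i f x = pd i h x := by
  rw [pd, pd, H.fderiv_eq]

lemma pd_add (hf : DifferentiableAt ℝ f x) (hh : DifferentiableAt ℝ h x) :
    pd i (fun y => f y + h y) x = pd i f x + pd i h x := by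
  simp only [pd, fderiv_fun_add hf hh, _root_.add_apply]

lemma pd_sub (hf : DifferentiableAt ℝ f x) (hh : DifferentiableAt ℝ h x) :
    pd i (fun y => f y - h y) x = pd i f x - pd i h x := by
  simp only [pd, fderiv_fun_sub hf hh, _root_.sub_apply]

lemma pd_sum {ι : Type*} {F : ι → Vec2 → ℝ} {s : Finset ι}
    (hF : ∀ m ∈ s, DifferentiableAt ℝ (F m) x) :
    pd i (fun y => ∑ m ∈ s, F m y) x = ∑ m ∈ s, pd i (F m) x := by
  simp only [pd, fderiv_fun_sum hF, _root_.sum_apply]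

lemma pd_const_mul (hf : DifferentiableAt ℝ f x) (c : ℝ) :
    pd i (fun y => c * f y) x = c * pd i f x := by
  simp only [pd, fderiv_const_mul hf, _root_.smul_apply, smul_eq_mul]

lemma pd_mul (hf : DifferentiableAt ℝ f x) (hh : DifferentiableAt ℝ h x) :
    pd i (fun y => f y * h y) x = pd i f x * h x + f x * pd i h x := by
  simp only [pd, fderiv_fun_mul hf hh, _root_.add_apply, _root_.smul_apply, smul_eq_mul]
  ring

lemma differentiableAt_pd (hf : ContDiffAt ℝ 2 f x) : DifferentiableAt ℝ (pd i f) x :=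
  ((hf.fderiv_right (m := 1) (by norm_num)).differentiableAt (by norm_num)).clm_apply
    (differentiableAt_const _)

lemma pd_pd_eq (hf : ContDiffAt ℝ 2 f x) (j : Fin 2) :
    pd i (pd j f) x = fderiv ℝ (fderiv ℝ f) x (Pi.single i 1) (Pi.single j 1) := by
  have hdf : DifferentiableAt ℝ (fderiv ℝ f) x :=
    (hf.fderiv_right (m := 1) (by norm_num)).differentiableAt (by norm_num)
  unfold pd
  rw [fderiv_clm_apply hdf (differentiableAt_const _)]
  simp

lemma pd_comm (hf : ContDiffAt ℝ 2 f x) (j : Fin 2) : pd i (pd j f) x = pd j (pd i f) x := by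
  rw [pd_pd_eq i hf, pd_pd_eq j hf]
  exact hf.isSymmSndFDerivAt (by simp) _ _

end PartialDerivatives

section Christoffel

variable {g : Vec2 → Mat2} {x : Vec2}

lemma pd_apply_comm (hgs : ∀ᶠ y in 𝓝 x, (g y).IsSymm) (k i j : Fin 2) :
    pd k (fun y => g y i j) x = pd k (fun y => g y j i) x :=
  pd_congr k (hgs.mono fun _ hy => hy.apply j i)

lemma Gamma1_comm (hgs : ∀ᶠ y in 𝓝 x, (g y).IsSymm) (i j : Fin 2) :
    Gamma1 g x i j = Gamma1 g x j i := by
  funext l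
  rw [Gamma1, Gamma1, pd_apply_comm hgs i j l, pd_apply_comm hgs j l i, pd_apply_comm hgs l i j]
  ring

lemma pd_apply_eq_Gamma1_add (hgs : ∀ᶠ y in 𝓝 x, (g y).IsSymm) (k i j : Fin 2) :
    pd k (fun y => g y i j) x = Gamma1 g x k i j + Gamma1 g x k j i := by
  rw [Gamma1, Gamma1, pd_apply_comm hgs k j i, pd_apply_comm hgs i k j, pd_apply_comm hgs j k i]
  ring

lemma Gamma2_eq_mulVec (g : Vec2 → Mat2) (x : Vec2) (i j : Fin 2) :
    Gamma2 g x i j = (g x)⁻¹ *ᵥ Gamma1 g x i j := rfl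

lemma Gamma2_comm (hgs : ∀ᶠ y in 𝓝 x, (g y).IsSymm) (i j : Fin 2) :
    Gamma2 g x i j = Gamma2 g x j i := by
  rw [Gamma2_eq_mulVec, Gamma1_comm hgs, Gamma2_eq_mulVec]

lemma mulVec_Gamma2 (hx : IsUnit (g x).det) (i j : Fin 2) :
    g x *ᵥ Gamma2 g x i j = Gamma1 g x i j := by
  rw [Gamma2_eq_mulVec, mulVec_mulVec, mul_nonsing_inv _ hx, one_mulVec]

lemma Gamma1_dotProduct_Gamma2_comm (hgx : (g x).IsSymm) (i j k l : Fin 2) :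
    Gamma1 g x i j ⬝ᵥ Gamma2 g x k l = Gamma1 g x k l ⬝ᵥ Gamma2 g x i j := by
  rw [Gamma2_eq_mulVec, dotProduct_inv_mulVec_eq_inv_mulVec_dotProduct hgx, dotProduct_comm,
    Gamma2_eq_mulVec]

lemma differentiableAt_Gamma1 (hg : ∀ i j, ContDiffAt ℝ 2 (fun y => g y i j) x)
    (i j l : Fin 2) : DifferentiableAt ℝ (fun y => Gamma1 g y i j l) x := by
  have hnum := ((differentiableAt_pd i (hg j l)).fun_add (differentiableAt_pd j (hg l i))).fun_sub
    (differentiableAt_pd l (hg i j))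
  simpa only [Gamma1, div_eq_mul_inv] using hnum.mul_const (2 : ℝ)⁻¹

lemma differentiableAt_Gamma2 (hg : ∀ i j, ContDiffAt ℝ 2 (fun y => g y i j) x)
    (hx : IsUnit (g x).det) (i j k : Fin 2) :
    DifferentiableAt ℝ (fun y => Gamma2 g y i j k) x :=
  DifferentiableAt.fun_sum fun l _ =>
    (differentiableAt_inv_apply (fun i j => (hg i j).differentiableAt two_ne_zero) hx k l).fun_mul
      (differentiableAt_Gamma1 hg i j l)

lemma pd_Gamma1 (hg : ∀ i j, ContDiffAt ℝ 2 (fun y => g y i j) x)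
    (hgs : ∀ᶠ y in 𝓝 x, (g y).IsSymm) (hx : IsUnit (g x).det) (a b c d : Fin 2) :
    pd a (fun y => Gamma1 g y b c d) x =
      ∑ m, ((Gamma1 g x a d m + Gamma1 g x a m d) * Gamma2 g x b c m
        + g x d m * pd a (fun y => Gamma2 g y b c m) x) := by
  have hgd (i j : Fin 2) : DifferentiableAt ℝ (fun y => g y i j) x :=
    (hg i j).differentiableAt two_ne_zero
  have hunit : ∀ᶠ y in 𝓝 x, IsUnit (g y).det :=
    eventually_isUnit_det (fun i j => (hgd i j).continuousAt) hx
  have hlower : (fun y => Gamma1 g y b c d) =ᶠ[𝓝 x] fun y => ∑ m, g y d m * Gamma2 g y b c m :=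
    hunit.mono fun y hy => (congrFun (mulVec_Gamma2 hy b c) d).symm
  have hΓ := differentiableAt_Gamma2 hg hx b c
  rw [pd_congr a hlower, pd_sum a fun m _ => (hgd d m).fun_mul (hΓ m)]
  simp only [pd_mul a (hgd d _) (hΓ _), pd_apply_eq_Gamma1_add hgs]

end Christoffel

section Riemann

variable {g : Vec2 → Mat2} {x : Vec2}

/-- The covariant Riemann tensor
`R_{abcd} = ∂_a Γ_{bcd} - ∂_b Γ_{acd} - Γ_{adp} Γ^p_{bc} + Γ_{bdp} Γ^p_{ac}`, with the sign
convention of `R1221`. -/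
def riemannDown (g : Vec2 → Mat2) (x : Vec2) (a b c d : Fin 2) : ℝ :=
  pd a (fun y => Gamma1 g y b c d) x - pd b (fun y => Gamma1 g y a c d) x
    - Gamma1 g x a d ⬝ᵥ Gamma2 g x b c + Gamma1 g x b d ⬝ᵥ Gamma2 g x a c

/-- The mixed Riemann tensor
`R_{abc}^d = ∂_a Γ^d_{bc} - ∂_b Γ^d_{ac} + Γ^d_{ap} Γ^p_{bc} - Γ^d_{bp} Γ^p_{ac}`, with the upper
index last. -/
def riemannUp (g : Vec2 → Mat2) (x : Vec2) (a b c d : Fin 2) : ℝ :=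
  pd a (fun y => Gamma2 g y b c d) x - pd b (fun y => Gamma2 g y a c d) x
    + ∑ p, (Gamma2 g x a p d * Gamma2 g x b c p - Gamma2 g x b p d * Gamma2 g x a c p)

lemma riemannDown_zero_one_one_zero (g : Vec2 → Mat2) (x : Vec2) :
    riemannDown g x 0 1 1 0 = R1221 g x := rfl

lemma mulVec_riemannUp (hg : ∀ i j, ContDiffAt ℝ 2 (fun y => g y i j) x)
    (hgs : ∀ᶠ y in 𝓝 x, (g y).IsSymm) (hx : IsUnit (g x).det) (a b c : Fin 2) :
    g x *ᵥ riemannUp g x a b c = riemannDown g x a b c := by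
  funext d
  have hlower (i j : Fin 2) : ∑ m, g x d m * Gamma2 g x i j m = Gamma1 g x i j d :=
    congrFun (mulVec_Gamma2 hx i j) d
  simp only [riemannDown, riemannUp, pd_Gamma1 hg hgs hx, ← hlower, mulVec, dotProduct,
    Fin.sum_univ_two]
  ring

lemma riemannDown_swap (hg : ∀ i j, ContDiffAt ℝ 2 (fun y => g y i j) x)
    (hgs : ∀ᶠ y in 𝓝 x, (g y).IsSymm) (a b c d : Fin 2) :
    riemannDown g x a b d c = -riemannDown g x a b c d := by
  have hcompat (i j : Fin 2) :
      pd i (fun y => Gamma1 g y j c d) x + pd i (fun y => Gamma1 g y j d c) x =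
        pd i (pd j fun y => g y c d) x := by
    rw [← pd_add i (differentiableAt_Gamma1 hg j c d) (differentiableAt_Gamma1 hg j d c)]
    exact pd_congr i <| hgs.eventually_nhds.mono fun y hy => (pd_apply_eq_Gamma1_add hy j c d).symm
  have hpairing := Gamma1_dotProduct_Gamma2_comm hgs.self_of_nhds
  unfold riemannDown
  linear_combination hcompat a b - hcompat b a + pd_comm a (hg c d) b
    - hpairing a c b d + hpairing b c a d

lemma riemannDown_zero_one (hg : ∀ i j, ContDiffAt ℝ 2 (fun y => g y i j) x)
    (hgs : ∀ᶠ y in 𝓝 x, (g y).IsSymm) (c d : Fin 2) :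
    riemannDown g x 0 1 c d = eps2 d c * R1221 g x := by
  have hswap := riemannDown_swap hg hgs 0 1
  rw [← riemannDown_zero_one_one_zero]
  revert c d
  simp only [Fin.forall_fin_two, eps2, Fin.val_zero, Fin.val_one]
  push_cast
  refine ⟨⟨?_, ?_⟩, ?_, ?_⟩ <;> linarith [hswap 0 0, hswap 1 0, hswap 1 1]

lemma riemannUp_zero_one (hg : ∀ i j, ContDiffAt ℝ 2 (fun y => g y i j) x)
    (hgs : ∀ᶠ y in 𝓝 x, (g y).IsSymm) (hx : IsUnit (g x).det) (c m : Fin 2) :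
    riemannUp g x 0 1 c m = R1221 g x * ∑ d, (g x)⁻¹ m d * eps2 d c := by
  have hraise : riemannUp g x 0 1 c = (g x)⁻¹ *ᵥ riemannDown g x 0 1 c := by
    rw [← mulVec_riemannUp hg hgs hx, mulVec_mulVec, nonsing_inv_mul _ hx, one_mulVec]
  simp only [hraise, mulVec, dotProduct, riemannDown_zero_one hg hgs]
  rw [Finset.mul_sum]
  exact Finset.sum_congr rfl fun d _ => by ring

lemma sum_eps2_mul_riemannUp (hg : ∀ i j, ContDiffAt ℝ 2 (fun y => g y i j) x)
    (hgs : ∀ᶠ y in 𝓝 x, (g y).IsSymm) (hx : IsUnit (g x).det) (S : Mat2) :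
    ∑ j, ∑ k, ∑ m, eps2 j k * S m k * riemannUp g x 0 1 j m =
      -(R1221 g x * ((g x)⁻¹ * S).trace) := by
  have hinv : (g x)⁻¹ 0 1 = (g x)⁻¹ 1 0 := hgs.self_of_nhds.inv.apply 1 0
  simp only [riemannUp_zero_one hg hgs hx, trace_fin_two, mul_apply, Fin.sum_univ_two, eps2,
    Fin.val_zero, Fin.val_one]
  push_cast
  linear_combination R1221 g x * (S 1 0 - S 0 1) * hinv

end Riemann

section FirstVariation

variable {g σ : Vec2 → Mat2} {x : Vec2}

lemma Gamma1_add_smul (hg : ∀ i j, DifferentiableAt ℝ (fun y => g y i j) x)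
    (hσ : ∀ i j, DifferentiableAt ℝ (fun y => σ y i j) x) (t : ℝ) (i j : Fin 2) :
    Gamma1 (fun y => g y + t • σ y) x i j = Gamma1 g x i j + t • Gamma1 σ x i j := by
  have hpd (k i j : Fin 2) : pd k (fun y => (g y + t • σ y) i j) x =
      pd k (fun y => g y i j) x + t * pd k (fun y => σ y i j) x := by
    simp only [Matrix.add_apply, Matrix.smul_apply, smul_eq_mul]
    rw [pd_add k (hg i j) ((hσ i j).const_mul t), pd_const_mul k (hσ i j)]
  funext l
  simp only [Gamma1, hpd, Pi.add_apply, Pi.smul_apply, smul_eq_mul]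
  ring

lemma pd_Gamma1_add_smul (hg : ∀ i j, ContDiffAt ℝ 2 (fun y => g y i j) x)
    (hσ : ∀ i j, ContDiffAt ℝ 2 (fun y => σ y i j) x) (t : ℝ) (q i j l : Fin 2) :
    pd q (fun y => Gamma1 (fun z => g z + t • σ z) y i j l) x =
      pd q (fun y => Gamma1 g y i j l) x + t * pd q (fun y => Gamma1 σ y i j l) x := by
  have heventually {h : Vec2 → Mat2} (hh : ∀ i j, ContDiffAt ℝ 2 (fun y => h y i j) x) :
      ∀ᶠ y in 𝓝 x, ∀ i j, DifferentiableAt ℝ (fun z => h z i j) y := by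
    simp only [eventually_all]
    exact fun i j => ((hh i j).eventually (by simp)).mono fun y hy =>
      hy.differentiableAt two_ne_zero
  have hlinear : (fun y => Gamma1 (fun z => g z + t • σ z) y i j l) =ᶠ[𝓝 x]
      fun y => Gamma1 g y i j l + t * Gamma1 σ y i j l := by
    filter_upwards [heventually hg, heventually hσ] with y hgy hσy
    exact congrFun (Gamma1_add_smul hgy hσy t i j) l
  rw [pd_congr q hlinear, pd_add q (differentiableAt_Gamma1 hg i j l)
    ((differentiableAt_Gamma1 hσ i j l).const_mul t),
    pd_const_mul q (differentiableAt_Gamma1 hσ i j l)]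

/-- The first variation at `g`, in the direction `σ`, of the product `Γ_{ijp} Γ^p_{kl}`. The
last term comes from the variation `-g⁻¹σg⁻¹` of `g⁻¹`. -/
def christoffelProductVariation (g σ : Vec2 → Mat2) (x : Vec2) (i j k l : Fin 2) : ℝ :=
  Gamma1 σ x i j ⬝ᵥ Gamma2 g x k l + Gamma2 g x i j ⬝ᵥ Gamma1 σ x k l
    - Gamma2 g x i j ⬝ᵥ σ x *ᵥ Gamma2 g x k l

lemma hasDerivAt_Gamma1_dotProduct_Gamma2 (hg : ∀ i j, DifferentiableAt ℝ (fun y => g y i j) x)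
    (hσ : ∀ i j, DifferentiableAt ℝ (fun y => σ y i j) x) (hgx : (g x).IsSymm)
    (hx : IsUnit (g x).det) (i j k l : Fin 2) :
    HasDerivAt
      (fun t : ℝ => Gamma1 (fun y => g y + t • σ y) x i j ⬝ᵥ Gamma2 (fun y => g y + t • σ y) x k l)
      (christoffelProductVariation g σ x i j k l) 0 := by
  simp only [Gamma2_eq_mulVec, Gamma1_add_smul hg hσ]
  convert! hasDerivAt_dotProduct_inv_mulVec hx (σ x) (Gamma1 g x i j) (Gamma1 σ x i j)
    (Gamma1 g x k l) (Gamma1 σ x k l) using 1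
  simp only [christoffelProductVariation, Gamma2_eq_mulVec, ← mulVec_mulVec,
    dotProduct_inv_mulVec_eq_inv_mulVec_dotProduct hgx (Gamma1 g x i j)]

/-- The first variation at `g`, in the direction `σ`, of the Riemann component `R₁₂₂₁`.
Its linear part `∂₁Γ₂₂₁ - ∂₂Γ₁₂₁` contributes `-½ inc σ`. -/
def R1221Variation (g σ : Vec2 → Mat2) (x : Vec2) : ℝ :=
  -(1 / 2) * incE σ x - christoffelProductVariation g σ x 0 0 1 1
    + christoffelProductVariation g σ x 1 0 0 1

lemma pd_Gamma1_sub_eq_incE (hσ : ∀ i j, ContDiffAt ℝ 2 (fun y => σ y i j) x)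
    (hσs : ∀ᶠ y in 𝓝 x, (σ y).IsSymm) :
    pd 0 (fun y => Gamma1 σ y 1 1 0) x - pd 1 (fun y => Gamma1 σ y 0 1 0) x =
      -(1 / 2) * incE σ x := by
  have h110 : (fun y => Gamma1 σ y 1 1 0) =ᶠ[𝓝 x]
      fun y => pd 1 (fun z => σ z 0 1) y - 1 / 2 * pd 0 (fun z => σ z 1 1) y := by
    filter_upwards [hσs.eventually_nhds] with y hy
    rw [Gamma1, pd_apply_comm hy 1 1 0]
    ring
  have h010 : (fun y => Gamma1 σ y 0 1 0) =ᶠ[𝓝 x]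
      fun y => 1 / 2 * pd 1 (fun z => σ z 0 0) y := by
    filter_upwards [hσs.eventually_nhds] with y hy
    rw [Gamma1, pd_apply_comm hy 0 1 0]
    ring
  have hd (i j k : Fin 2) := differentiableAt_pd k (hσ i j)
  rw [pd_congr 0 h110, pd_congr 1 h010, pd_sub 0 (hd 0 1 1) ((hd 1 1 0).const_mul _),
    pd_const_mul 0 (hd 1 1 0), pd_const_mul 1 (hd 0 0 1), incE]
  ring

lemma hasDerivAt_R1221 (hg : ∀ i j, ContDiffAt ℝ 2 (fun y => g y i j) x)
    (hσ : ∀ i j, ContDiffAt ℝ 2 (fun y => σ y i j) x) (hgx : (g x).IsSymm)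
    (hσs : ∀ᶠ y in 𝓝 x, (σ y).IsSymm) (hx : IsUnit (g x).det) :
    HasDerivAt (fun t : ℝ => R1221 (fun y => g y + t • σ y) x) (R1221Variation g σ x) 0 := by
  have hproduct := hasDerivAt_Gamma1_dotProduct_Gamma2
    (fun i j => (hg i j).differentiableAt two_ne_zero)
    (fun i j => (hσ i j).differentiableAt two_ne_zero) hgx hx
  have hlinear : HasDerivAt (fun t : ℝ =>
      pd 0 (fun y => Gamma1 (fun z => g z + t • σ z) y 1 1 0) x
        - pd 1 (fun y => Gamma1 (fun z => g z + t • σ z) y 0 1 0) x) (-(1 / 2) * incE σ x) 0 := by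
    simp only [pd_Gamma1_add_smul hg hσ, ← pd_Gamma1_sub_eq_incE hσ hσs]
    exact (hasDerivAt_add_smul _ _ 0).fun_sub (hasDerivAt_add_smul _ _ 0)
  exact (hlinear.fun_sub (hproduct 0 0 1 1)).fun_add (hproduct 1 0 0 1)

end FirstVariation

section Incompatibility

variable {g σ : Vec2 → Mat2} {x : Vec2}

lemma sum_eps2_mul_pd_pd (hσ : ∀ i j, ContDiffAt ℝ 2 (fun y => σ y i j) x)
    (hσs : ∀ᶠ y in 𝓝 x, (σ y).IsSymm) :
    ∑ q, ∑ i, ∑ j, ∑ k, eps2 q i * eps2 j k * pd j (pd q (fun y => σ y i k)) x = incE σ x := by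
  have hswap : pd 1 (pd 0 fun y => σ y 1 0) x = pd 0 (pd 1 fun y => σ y 0 1) x := by
    rw [pd_comm 1 (hσ 1 0)]
    exact pd_congr 0 (hσs.eventually_nhds.mono fun y hy => pd_apply_comm hy 1 1 0)
  simp only [incE, eps2, Fin.sum_univ_two, Fin.val_zero, Fin.val_one]
  push_cast
  linear_combination -hswap

lemma pd_sum_Gamma2_mul (hg : ∀ i j, ContDiffAt ℝ 2 (fun y => g y i j) x)
    (hx : IsUnit (g x).det) (hσ : ∀ i j, DifferentiableAt ℝ (fun y => σ y i j) x)
    (q j i k : Fin 2) :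
    pd q (fun y => ∑ m, Gamma2 g y j i m * σ y m k) x =
      ∑ m, (pd q (fun y => Gamma2 g y j i m) x * σ x m k
        + Gamma2 g x j i m * pd q (fun y => σ y m k) x) := by
  have hΓ := differentiableAt_Gamma2 hg hx j i
  rw [pd_sum q fun m _ => (hΓ m).fun_mul (hσ m k)]
  exact Finset.sum_congr rfl fun m _ => pd_mul q (hΓ m) (hσ m k)

lemma det_mul_incg (hg : ∀ i j, ContDiffAt ℝ 2 (fun y => g y i j) x)
    (hσ : ∀ i j, ContDiffAt ℝ 2 (fun y => σ y i j) x) (hgs : ∀ᶠ y in 𝓝 x, (g y).IsSymm)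
    (hσs : ∀ᶠ y in 𝓝 x, (σ y).IsSymm) (hx : IsUnit (g x).det) :
    (g x).det * incg g σ x =
      R1221 g x * ((g x)⁻¹ * σ x).trace - 2 * R1221Variation g σ x := by
  have hdσ (i j : Fin 2) : DifferentiableAt ℝ (fun y => σ y i j) x :=
    (hσ i j).differentiableAt two_ne_zero
  have hΓ : Gamma2 g x 1 0 = Gamma2 g x 0 1 := Gamma2_comm hgs 1 0
  have hdΓ (q m : Fin 2) :
      pd q (fun y => Gamma2 g y 1 0 m) x = pd q (fun y => Gamma2 g y 0 1 m) x :=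
    pd_congr q (hgs.eventually_nhds.mono fun y hy => congrFun (Gamma2_comm hy 1 0) m)
  have hσ10 : σ x 1 0 = σ x 0 1 := hσs.self_of_nhds.apply 0 1
  have hdσ10 (q : Fin 2) := pd_apply_comm hσs q 1 0
  have hcurv := sum_eps2_mul_riemannUp hg hgs hx (σ x)
  rw [incg, mul_inv_cancel_left₀ hx.ne_zero, sum_eps2_mul_pd_pd hσ hσs]
  simp only [pd_sum_Gamma2_mul hg hx hdσ]
  simp only [R1221Variation, christoffelProductVariation, riemannUp, Gamma1, dotProduct, mulVec,
    Fin.sum_univ_two, eps2, Fin.val_zero, Fin.val_one, hΓ, hdΓ, hσ10, hdσ10] at hcurv ⊢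
  push_cast at hcurv ⊢
  linear_combination -hcurv

end Incompatibility

/-- first variation of the Gauss curvature density. -/
theorem firstVariation_gaussCurvature_density
    (Ω : Set Vec2) (hΩ : IsOpen Ω)
    (g σ : Vec2 → Mat2)
    (hg : ∀ i j, ContDiffOn ℝ 2 (fun y => g y i j) Ω)
    (hσ : ∀ i j, ContDiffOn ℝ 2 (fun y => σ y i j) Ω)
    (hg_symm : ∀ x ∈ Ω, (g x).IsSymm) (hσ_symm : ∀ x ∈ Ω, (σ x).IsSymm)
    (hg_pos : ∀ x ∈ Ω, (g x).PosDef)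
    (p : Vec2) (hp : p ∈ Ω) :
    HasDerivAt
      (fun t : ℝ => R1221 (fun y => g y + t • σ y) p / (g p + t • σ p).det *
        Real.sqrt (g p + t • σ p).det)
      (-(1 / 2) * Real.sqrt (g p).det * incg g σ p) 0 := by
  have hΩp : Ω ∈ 𝓝 p := hΩ.mem_nhds hp
  have hgp (i j : Fin 2) := (hg i j).contDiffAt hΩp
  have hσp (i j : Fin 2) := (hσ i j).contDiffAt hΩp
  have hgs : ∀ᶠ y in 𝓝 p, (g y).IsSymm := mem_of_superset hΩp hg_symm
  have hσs : ∀ᶠ y in 𝓝 p, (σ y).IsSymm := mem_of_superset hΩp hσ_symm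
  have hdet : 0 < (g p).det := (hg_pos p hp).det_pos
  have hunit : IsUnit (g p).det := hdet.ne'.isUnit
  have hR := hasDerivAt_R1221 hgp hσp hgs.self_of_nhds hσs hunit
  have hD := hasDerivAt_det_add_smul hunit (σ p)
  have hinc : incg g σ p = (R1221 g p * ((g p)⁻¹ * σ p).trace - 2 * R1221Variation g σ p) /
      (g p).det := by
    rw [← det_mul_incg hgp hσp hgs hσs hunit, mul_div_cancel_left₀ _ hdet.ne']
  refine (hasDerivAt_div_mul_sqrt hR hD (by simpa using hdet)).congr_deriv ?_
  simp only [hinc, zero_smul, add_zero]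
  field_simp
  ring
end
end

section
/- Let g be a symmetric positive definite real 2×2 matrix, σ a symmetric real 2×2 matrix, and τ₋, τ₊ ∈ ℝ² with det[τ₋ τ₊] > 0, where [τ₋ τ₊] is the matrix with columns τ₋ and τ₊. For a symmetric positive definite matrix ρ define the interior angle θ(ρ) = arccos( −(τ₋ᵀ ρ τ₊) / (√(τ₋ᵀ ρ τ₋) · √(τ₊ᵀ ρ τ₊)) ). Let τ̂₋, τ̂₊ be the g-unit tangents of τ₋, τ₊ and ν̂₋, ν̂₊ the g-unit normals of τ₋, τ₊. Then t ↦ θ(g + tσ) is differentiable at t = 0 with derivative ½ ( τ̂₋ᵀ σ ν̂₋ − ν̂₊ᵀ σ τ̂₊ ). (First variation of the interior angle in the direction σ.) -/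
noncomputable section

open Matrix BigOperators

/-!
In the basis formed by the `g`-unit tangent `τ̂` and `g`-unit normal `n̂` of `τ`, every vector `x`
satisfies `√(τᵀgτ) x = (τᵀgx) τ̂ + √(det g) det[τ x] n̂`. Pairing this expansion with `σ` expresses
`τ̂ᵀσn̂` through `τᵀσx` and `τᵀστ`. The derivative of the angle `arccos (-B / (√A √C))` has
denominator `√(AC - B²)`, and Gram's identity `AC - B² = det g · det[τ₋ τ₊]²` splits it into the sum
of two such expressions, one with `(τ, x) = (τ₋, τ₊)` and one with `(τ, x) = (τ₊, τ₋)`.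
-/

section Calculus

theorem hasDerivAt_matrix {𝕜 m n : Type*} [NontriviallyNormedField 𝕜] [Finite n]
    {ρ : 𝕜 → Matrix m n 𝕜} {σ : Matrix m n 𝕜} {t : 𝕜} :
    HasDerivAt ρ σ t ↔ ∀ i j, HasDerivAt (fun s => ρ s i j) (σ i j) t := by
  have := Fintype.ofFinite n
  exact hasDerivAt_pi.trans (forall_congr' fun _ => hasDerivAt_pi)

theorem hasDerivAt_add_smul_s10 {𝕜 m n : Type*} [NontriviallyNormedField 𝕜] [Finite n]
    (g σ : Matrix m n 𝕜) (t : 𝕜) : HasDerivAt (fun s : 𝕜 => g + s • σ) σ t :=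
  hasDerivAt_matrix.2 fun i j => by
    simpa using ((hasDerivAt_id t).mul_const (σ i j)).const_add (g i j)

theorem hasDerivAt_dotProduct_mulVec {𝕜 m n : Type*} [NontriviallyNormedField 𝕜] [Fintype m]
    [Fintype n] {ρ : 𝕜 → Matrix m n 𝕜} {σ : Matrix m n 𝕜} {t : 𝕜} (hρ : HasDerivAt ρ σ t)
    (u : m → 𝕜) (v : n → 𝕜) : HasDerivAt (fun s => u ⬝ᵥ ρ s *ᵥ v) (u ⬝ᵥ σ *ᵥ v) t :=
  HasDerivAt.fun_sum fun i _ => HasDerivAt.const_mul _ <|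
    HasDerivAt.fun_sum fun j _ => (hasDerivAt_matrix.1 hρ i j).mul_const _

variable {A B C : ℝ → ℝ} {A' B' C' t : ℝ}

theorem hasDerivAt_div_sqrt_mul_sqrt (hA : HasDerivAt A A' t) (hB : HasDerivAt B B' t)
    (hC : HasDerivAt C C' t) (hA₀ : 0 < A t) (hC₀ : 0 < C t) :
    HasDerivAt (fun s => B s / (√(A s) * √(C s)))
      ((B' - B t * A' / (2 * A t) - B t * C' / (2 * C t)) / (√(A t) * √(C t))) t := by
  have hsA : √(A t) ≠ 0 := (Real.sqrt_pos.2 hA₀).ne'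
  have hsC : √(C t) ≠ 0 := (Real.sqrt_pos.2 hC₀).ne'
  refine (hB.fun_div ((hA.sqrt hA₀.ne').fun_mul (hC.sqrt hC₀.ne'))
    (mul_ne_zero hsA hsC)).congr_deriv ?_
  have hA₂ : 2 * A t = 2 * √(A t) ^ 2 := by rw [Real.sq_sqrt hA₀.le]
  have hC₂ : 2 * C t = 2 * √(C t) ^ 2 := by rw [Real.sq_sqrt hC₀.le]
  rw [hA₂, hC₂]
  field_simp
  ring

theorem one_sub_neg_div_sqrt_mul_sqrt_sq {a c : ℝ} (b : ℝ) (ha : 0 < a) (hc : 0 < c) :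
    1 - (-b / (√a * √c)) ^ 2 = (a * c - b ^ 2) / (a * c) := by
  rw [div_pow, mul_pow, Real.sq_sqrt ha.le, Real.sq_sqrt hc.le, neg_sq]
  field_simp

theorem hasDerivAt_arccos_neg_div_sqrt_mul_sqrt (hA : HasDerivAt A A' t) (hB : HasDerivAt B B' t)
    (hC : HasDerivAt C C' t) (hA₀ : 0 < A t) (hB₀ : B t ^ 2 < A t * C t) :
    HasDerivAt (fun s => Real.arccos (-B s / (√(A s) * √(C s))))
      ((B' - B t * A' / (2 * A t) - B t * C' / (2 * C t)) / √(A t * C t - B t ^ 2)) t := by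
  have hC₀ : 0 < C t := (pos_iff_pos_of_mul_pos ((sq_nonneg _).trans_lt hB₀)).1 hA₀
  have hsub : 0 < A t * C t - B t ^ 2 := sub_pos.2 hB₀
  have hcos := one_sub_neg_div_sqrt_mul_sqrt_sq (B t) hA₀ hC₀
  have hcos_pos : 0 < 1 - (-B t / (√(A t) * √(C t))) ^ 2 := by rw [hcos]; positivity
  have harccos := Real.hasDerivAt_arccos (x := -B t / (√(A t) * √(C t)))
    (fun h => by simp [h] at hcos_pos) (fun h => by simp [h] at hcos_pos)
  refine (harccos.comp t (hasDerivAt_div_sqrt_mul_sqrt hA hB.neg hC hA₀ hC₀)).congr_deriv ?_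
  rw [hcos, Real.sqrt_div hsub.le, Real.sqrt_mul hA₀.le, Pi.neg_apply]
  field_simp
  ring

end Calculus

section Rotation

theorem rot2_dotProduct_eq_det (u v : Vec2) : rot2 u ⬝ᵥ v = Matrix.det !![u 0, v 0; u 1, v 1] := by
  simp only [rot2, dotProduct, Fin.sum_univ_two, cons_val_zero, cons_val_one, det_fin_two_of]
  ring

theorem rot2_dotProduct_anticomm (u v : Vec2) : rot2 u ⬝ᵥ v = -(rot2 v ⬝ᵥ u) := by
  simp only [rot2, dotProduct, Fin.sum_univ_two, cons_val_zero, cons_val_one]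
  ring

theorem left_ne_zero_of_rot2_dotProduct_ne_zero {u v : Vec2} (h : rot2 u ⬝ᵥ v ≠ 0) : u ≠ 0 := by
  rintro rfl
  simp [rot2, dotProduct] at h

theorem rot2_dotProduct_rot2 (u v : Vec2) : rot2 u ⬝ᵥ rot2 v = u ⬝ᵥ v := by
  simp only [rot2, dotProduct, Fin.sum_univ_two, cons_val_zero, cons_val_one]
  ring

theorem dotProduct_smul_eq_add_smul_rot2 (w τ x : Vec2) :
    (w ⬝ᵥ τ) • x = (w ⬝ᵥ x) • τ + (rot2 τ ⬝ᵥ x) • rot2 w := by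
  ext k
  simp only [dotProduct, Fin.sum_univ_two, Pi.add_apply, Pi.smul_apply, smul_eq_mul]
  fin_cases k <;> simp [rot2] <;> ring

theorem gram_det_eq_det_mul_rot2_dotProduct_sq (g : Mat2) (u v : Vec2) :
    (u ⬝ᵥ g *ᵥ u) * (v ⬝ᵥ g *ᵥ v) - (u ⬝ᵥ g *ᵥ v) * (v ⬝ᵥ g *ᵥ u) =
      g.det * (rot2 u ⬝ᵥ v) ^ 2 := by
  simp only [rot2, mulVec, dotProduct, Fin.sum_univ_two, det_fin_two, cons_val_zero, cons_val_one]
  ring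

end Rotation

section UnitFrame

theorem gNormal_eq_inv_mulVec_rot2 (g : Mat2) (τ : Vec2) : gNormal g τ = g⁻¹ *ᵥ rot2 τ := by
  ext k
  simp only [gNormal, eps2, rot2, mulVec, dotProduct, Fin.sum_univ_two, Fin.val_zero, Fin.val_one,
    cons_val_zero, cons_val_one]
  push_cast
  ring

theorem gNormal_eq_smul_rot2_vecMul (g : Mat2) (τ : Vec2) :
    gNormal g τ = g.det⁻¹ • rot2 (τ ᵥ* g) := by
  have hadj : g.adjugate *ᵥ rot2 τ = rot2 (τ ᵥ* g) := by
    ext k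
    fin_cases k <;> simp [Matrix.adjugate_fin_two, rot2, mulVec, vecMul, dotProduct] <;> ring
  rw [gNormal_eq_inv_mulVec_rot2, Matrix.inv_def, Ring.inverse_eq_inv', smul_mulVec, hadj]

variable {g : Mat2} {τ : Vec2}

theorem gNormal_dotProduct_mulVec_gNormal (hg : g.det ≠ 0) (τ : Vec2) :
    gNormal g τ ⬝ᵥ g *ᵥ gNormal g τ = (τ ⬝ᵥ g *ᵥ τ) / g.det := by
  have hmul : g *ᵥ gNormal g τ = rot2 τ := by
    rw [gNormal_eq_inv_mulVec_rot2, mulVec_mulVec, Matrix.mul_nonsing_inv _ hg.isUnit, one_mulVec]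
  rw [hmul, gNormal_eq_smul_rot2_vecMul, smul_dotProduct, rot2_dotProduct_rot2,
    ← dotProduct_mulVec, smul_eq_mul, inv_mul_eq_div]

theorem gUnitNormal_eq_smul_rot2_vecMul (hg : 0 < g.det) (hτ : 0 ≤ τ ⬝ᵥ g *ᵥ τ) :
    gUnitNormal g τ = (√(τ ⬝ᵥ g *ᵥ τ) * √g.det)⁻¹ • rot2 (τ ᵥ* g) := by
  have hscale : (√(τ ⬝ᵥ g *ᵥ τ) / √g.det)⁻¹ * g.det⁻¹ = (√(τ ⬝ᵥ g *ᵥ τ) * √g.det)⁻¹ := by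
    nth_rw 2 [← Real.mul_self_sqrt hg.le]
    field_simp
  rw [gUnitNormal, gNormal_dotProduct_mulVec_gNormal hg.ne', Real.sqrt_div hτ,
    gNormal_eq_smul_rot2_vecMul, smul_smul, hscale]

theorem sqrt_smul_eq_smul_gUnitTangent_add_smul_gUnitNormal (hg : 0 < g.det)
    (hτ : 0 < τ ⬝ᵥ g *ᵥ τ) (x : Vec2) :
    √(τ ⬝ᵥ g *ᵥ τ) • x =
      (τ ⬝ᵥ g *ᵥ x) • gUnitTangent g τ + (√g.det * (rot2 τ ⬝ᵥ x)) • gUnitNormal g τ := by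
  have hsτ : √(τ ⬝ᵥ g *ᵥ τ) ≠ 0 := (Real.sqrt_pos.2 hτ).ne'
  have hsg : √g.det ≠ 0 := (Real.sqrt_pos.2 hg).ne'
  have hexp := dotProduct_smul_eq_add_smul_rot2 (τ ᵥ* g) τ x
  simp only [← dotProduct_mulVec] at hexp
  calc √(τ ⬝ᵥ g *ᵥ τ) • x
      = (√(τ ⬝ᵥ g *ᵥ τ))⁻¹ • (τ ⬝ᵥ g *ᵥ τ) • x := by
        rw [smul_smul, inv_mul_eq_div, Real.div_sqrt]
    _ = _ := by
        rw [hexp, gUnitTangent, gUnitNormal_eq_smul_rot2_vecMul hg hτ.le, smul_add]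
        simp only [smul_smul]
        congr 2 <;> field_simp

theorem gUnitTangent_dotProduct_mulVec_gUnitNormal (hg : 0 < g.det) (hτ : 0 < τ ⬝ᵥ g *ᵥ τ)
    (σ : Mat2) {x : Vec2} (hx : rot2 τ ⬝ᵥ x ≠ 0) :
    gUnitTangent g τ ⬝ᵥ σ *ᵥ gUnitNormal g τ =
      (τ ⬝ᵥ σ *ᵥ x - (τ ⬝ᵥ g *ᵥ x) / (τ ⬝ᵥ g *ᵥ τ) * (τ ⬝ᵥ σ *ᵥ τ)) /
        (√g.det * (rot2 τ ⬝ᵥ x)) := by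
  have hsτ : √(τ ⬝ᵥ g *ᵥ τ) ≠ 0 := (Real.sqrt_pos.2 hτ).ne'
  have hsg : √g.det ≠ 0 := (Real.sqrt_pos.2 hg).ne'
  have hpair := congrArg (fun y => gUnitTangent g τ ⬝ᵥ σ *ᵥ y)
    (sqrt_smul_eq_smul_gUnitTangent_add_smul_gUnitNormal hg hτ x)
  simp only [mulVec_add, mulVec_smul, dotProduct_add, dotProduct_smul, smul_eq_mul] at hpair
  have htangent (y : Vec2) : gUnitTangent g τ ⬝ᵥ y = (τ ⬝ᵥ y) / √(τ ⬝ᵥ g *ᵥ τ) := by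
    rw [gUnitTangent, smul_dotProduct, smul_eq_mul, inv_mul_eq_div]
  have htt : gUnitTangent g τ ⬝ᵥ σ *ᵥ gUnitTangent g τ = (τ ⬝ᵥ σ *ᵥ τ) / (τ ⬝ᵥ g *ᵥ τ) := by
    rw [htangent, gUnitTangent, mulVec_smul, dotProduct_smul, smul_eq_mul, inv_mul_eq_div,
      div_div, Real.mul_self_sqrt hτ.le]
  have htx : √(τ ⬝ᵥ g *ᵥ τ) * (gUnitTangent g τ ⬝ᵥ σ *ᵥ x) = τ ⬝ᵥ σ *ᵥ x := by
    rw [htangent, mul_div_cancel₀ _ hsτ]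
  rw [htx, htt] at hpair
  rw [eq_div_iff (mul_ne_zero hsg hx), hpair]
  ring

theorem gUnitNormal_dotProduct_mulVec_gUnitTangent (hg : 0 < g.det) (hτ : 0 < τ ⬝ᵥ g *ᵥ τ)
    (σ : Mat2) {x : Vec2} (hx : rot2 τ ⬝ᵥ x ≠ 0) :
    gUnitNormal g τ ⬝ᵥ σ *ᵥ gUnitTangent g τ =
      (x ⬝ᵥ σ *ᵥ τ - (τ ⬝ᵥ g *ᵥ x) / (τ ⬝ᵥ g *ᵥ τ) * (τ ⬝ᵥ σ *ᵥ τ)) /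
        (√g.det * (rot2 τ ⬝ᵥ x)) := by
  simpa only [dotProduct_transpose_mulVec] using
    gUnitTangent_dotProduct_mulVec_gUnitNormal hg hτ σᵀ hx

end UnitFrame

/-- The angle, measured in the metric `ρ`, between `-u` and `v`: the interior angle at a vertex
which the boundary enters with tangent `u` and leaves with tangent `v`. -/
def interiorAngle (ρ : Mat2) (u v : Vec2) : ℝ :=
  Real.arccos (-(u ⬝ᵥ ρ *ᵥ v) / (√(u ⬝ᵥ ρ *ᵥ u) * √(v ⬝ᵥ ρ *ᵥ v)))

theorem dotProduct_mulVec_comm_of_isSymm {n R : Type*} [Fintype n] [NonUnitalCommSemiring R]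
    {g : Matrix n n R} (hg : g.IsSymm) (u v : n → R) : u ⬝ᵥ g *ᵥ v = v ⬝ᵥ g *ᵥ u := by
  rw [← dotProduct_transpose_mulVec, hg.eq]

theorem hasDerivAt_interiorAngle {ρ : ℝ → Mat2} {σ : Mat2} {t : ℝ} (hρ : HasDerivAt ρ σ t)
    (hpos : (ρ t).PosDef) {u v : Vec2} (huv : 0 < rot2 u ⬝ᵥ v) :
    HasDerivAt (fun s => interiorAngle (ρ s) u v)
      ((u ⬝ᵥ σ *ᵥ v - (u ⬝ᵥ ρ t *ᵥ v) * (u ⬝ᵥ σ *ᵥ u) / (2 * (u ⬝ᵥ ρ t *ᵥ u))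
        - (u ⬝ᵥ ρ t *ᵥ v) * (v ⬝ᵥ σ *ᵥ v) / (2 * (v ⬝ᵥ ρ t *ᵥ v)))
        / (√(ρ t).det * (rot2 u ⬝ᵥ v))) t := by
  have hsymm : (ρ t).IsSymm := isHermitian_iff_isSymm.1 hpos.isHermitian
  have hgram := gram_det_eq_det_mul_rot2_dotProduct_sq (ρ t) u v
  rw [dotProduct_mulVec_comm_of_isSymm hsymm v u, ← sq] at hgram
  have hlt : (u ⬝ᵥ ρ t *ᵥ v) ^ 2 < (u ⬝ᵥ ρ t *ᵥ u) * (v ⬝ᵥ ρ t *ᵥ v) :=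
    sub_pos.1 (hgram ▸ mul_pos hpos.det_pos (pow_pos huv 2))
  have hderiv := hasDerivAt_arccos_neg_div_sqrt_mul_sqrt (hasDerivAt_dotProduct_mulVec hρ u u)
    (hasDerivAt_dotProduct_mulVec hρ u v) (hasDerivAt_dotProduct_mulVec hρ v v)
    (hpos.dotProduct_mulVec_pos (left_ne_zero_of_rot2_dotProduct_ne_zero huv.ne')) hlt
  rwa [hgram, Real.sqrt_mul hpos.det_pos.le, Real.sqrt_sq huv.le] at hderiv

theorem firstVariation_angle_general {ρ : ℝ → Mat2} {σ : Mat2} {t : ℝ} (hρ : HasDerivAt ρ σ t)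
    (hpos : (ρ t).PosDef) {τm τp : Vec2} (hdet : 0 < Matrix.det !![τm 0, τp 0; τm 1, τp 1]) :
    HasDerivAt (fun s => interiorAngle (ρ s) τm τp)
      (1 / 2 * (gUnitTangent (ρ t) τm ⬝ᵥ σ *ᵥ gUnitNormal (ρ t) τm
        - gUnitNormal (ρ t) τp ⬝ᵥ σ *ᵥ gUnitTangent (ρ t) τp)) t := by
  have hsymm : (ρ t).IsSymm := isHermitian_iff_isSymm.1 hpos.isHermitian
  rw [← rot2_dotProduct_eq_det] at hdet
  have hdet_swap : rot2 τp ⬝ᵥ τm ≠ 0 := by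
    rw [rot2_dotProduct_anticomm]
    exact neg_ne_zero.2 hdet.ne'
  have hm : 0 < τm ⬝ᵥ ρ t *ᵥ τm :=
    hpos.dotProduct_mulVec_pos (left_ne_zero_of_rot2_dotProduct_ne_zero hdet.ne')
  have hp : 0 < τp ⬝ᵥ ρ t *ᵥ τp :=
    hpos.dotProduct_mulVec_pos (left_ne_zero_of_rot2_dotProduct_ne_zero hdet_swap)
  refine (hasDerivAt_interiorAngle hρ hpos hdet).congr_deriv ?_
  rw [gUnitTangent_dotProduct_mulVec_gUnitNormal hpos.det_pos hm σ hdet.ne',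
    gUnitNormal_dotProduct_mulVec_gUnitTangent hpos.det_pos hp σ hdet_swap,
    rot2_dotProduct_anticomm τp τm, dotProduct_mulVec_comm_of_isSymm hsymm τp τm]
  ring

/-- first variation of the interior angle in the direction `σ`. -/
theorem firstVariation_angle
    (g : Mat2) (hg_symm : g.IsSymm) (hg_pos : g.PosDef)
    (σ : Mat2) (hσ_symm : σ.IsSymm)
    (τm τp : Vec2) (hdet : 0 < Matrix.det !![τm 0, τp 0; τm 1, τp 1]) :
    HasDerivAt
      (fun t : ℝ => Real.arccos
        (-(τm ⬝ᵥ (g + t • σ).mulVec τp) /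
          (Real.sqrt (τm ⬝ᵥ (g + t • σ).mulVec τm) *
            Real.sqrt (τp ⬝ᵥ (g + t • σ).mulVec τp))))
      (1 / 2 * (gUnitTangent g τm ⬝ᵥ σ.mulVec (gUnitNormal g τm)
        - gUnitNormal g τp ⬝ᵥ σ.mulVec (gUnitTangent g τp))) 0 := by
  simpa only [interiorAngle, zero_smul, add_zero] using
    firstVariation_angle_general (hasDerivAt_add_smul_s10 g σ 0) (by simpa using hg_pos) hdet
end
end
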